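/- The shuffle product with spectral parameters, A * B = Σ over shuffles {1,...,k+l} = {a₁<...<a_k}⊔{b₁<...<b_l} of [∏_{i=k..1, j=1..l, a_i<b_j} R_{a_i b_j}(z_{a_i}/z_{b_j})] A_{a₁...a_k}(z_{a₁},...,z_{a_k}) [∏_{i=1..k, j=l..1} R̃_{a_i b_j}(z_{a_i}/z_{b_j})] B_{b₁...b_l}(z_{b₁},...,z_{b_l}) [∏_{i=k..1, j=1..l, a_i>b_j} R_{a_i b_j}(z_{a_i}/z_{b_j})], is associative on ⊕_{k≥0} End(V^{⊗k})(z₁,...,z_k) with unit 1 ∈ End(V^{⊗0}). -/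

import Mathlib

/-!
STATEMENT 14: The shuffle product with spectral parameters,
`A * B = Σ_{shuffles} [∏_{a_i<b_j} R_{a_ib_j}(z_{a_i}/z_{b_j})]
 A_{a₁…a_k}(z_{a₁},…) [∏ R̃_{a_ib_j}(z_{a_i}/z_{b_j})] B_{b₁…b_l}(z_{b₁},…)
 [∏_{a_i>b_j} R_{a_ib_j}(z_{a_i}/z_{b_j})]`,
is associative on `⊕_{k≥0} End(V^{⊗k})(z₁,…,z_k)` with unit
`1 ∈ End(V^{⊗0})`.  (Matrix-valued rational functions are modeled pointwise:
the identities are asserted at every tuple of spectral parameters where all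
denominators are nonzero.)
-/

abbrev Idx (n k : ℕ) := Fin k → Fin n

/-- The quantum affine gl_n R-matrix, indexed by `Fin 2 → Fin n`. -/
def RmI (n : ℕ) {K : Type*} [Field K] (q x : K) :
    Matrix (Idx n 2) (Idx n 2) K := fun u v =>
  (if u = v then (if u 0 = u 1 then (q - x * q⁻¹) / (1 - x) else 1) else 0) +
  (if u 0 ≠ u 1 ∧ v 0 = u 1 ∧ v 1 = u 0 then
    (q - q⁻¹) * (if u 0 < u 1 then x else 1) / (1 - x) else 0)

/-- `R̃(x) = R₂₁(1/(x q̄²))`. -/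
def RtI (n : ℕ) {K : Type*} [Field K] (q qbar x : K) :
    Matrix (Idx n 2) (Idx n 2) K := fun u v =>
  RmI n q ((x * qbar ^ 2)⁻¹) (u ∘ Equiv.swap 0 1) (v ∘ Equiv.swap 0 1)

def embed {K : Type*} [CommRing K] {n k N : ℕ} (ι : Fin k → Fin N)
    (X : Matrix (Idx n k) (Idx n k) K) : Matrix (Idx n N) (Idx n N) K :=
  fun f g => X (f ∘ ι) (g ∘ ι) *
    ∏ b : Fin N, if b ∈ Finset.image ι Finset.univ then 1
      else (if f b = g b then 1 else 0)

section Shuffle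

variable {K : Type*} [Field K] (n : ℕ) (q qbar : K)

/-- `∏ R_{a_i b_j}(z_{a_i}/z_{b_j})` over pairs with `a_i < b_j`,
ordered as `R_{a_kb_1} ⋯ R_{a_1b_l}`. -/
def prodLt {k l N : ℕ} (z : Fin N → K) (a : Fin k → Fin N) (b : Fin l → Fin N) :
    Matrix (Idx n N) (Idx n N) K :=
  (((List.finRange l).map fun j =>
    (((List.finRange k).reverse.map fun i =>
      if a i < b j then embed ![a i, b j] (RmI n q (z (a i) / z (b j)))
      else 1)).prod)).prod

/-- `∏ R_{a_i b_j}(z_{a_i}/z_{b_j})` over pairs with `a_i > b_j`. -/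
def prodGt {k l N : ℕ} (z : Fin N → K) (a : Fin k → Fin N) (b : Fin l → Fin N) :
    Matrix (Idx n N) (Idx n N) K :=
  (((List.finRange l).map fun j =>
    (((List.finRange k).reverse.map fun i =>
      if b j < a i then embed ![a i, b j] (RmI n q (z (a i) / z (b j)))
      else 1)).prod)).prod

/-- `R̃_{a_1b_l}(z_{a_1}/z_{b_l}) ⋯ R̃_{a_kb_1}(z_{a_k}/z_{b_1})`. -/
def prodMid {k l N : ℕ} (z : Fin N → K) (a : Fin k → Fin N) (b : Fin l → Fin N) :
    Matrix (Idx n N) (Idx n N) K :=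
  (((List.finRange k).map fun i =>
    (((List.finRange l).reverse.map fun j =>
      embed ![a i, b j] (RtI n q qbar (z (a i) / z (b j))))).prod)).prod

/-- The shuffle product with spectral parameters (pointwise in z). -/
def shufS {k l : ℕ}
    (A : (Fin k → K) → Matrix (Idx n k) (Idx n k) K)
    (B : (Fin l → K) → Matrix (Idx n l) (Idx n l) K) :
    (Fin (k + l) → K) → Matrix (Idx n (k + l)) (Idx n (k + l)) K := fun z =>
  ∑ s : {s : Finset (Fin (k + l)) // s.card = k},
    let a : Fin k → Fin (k + l) := s.1.orderEmbOfFin s.2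
    let b : Fin l → Fin (k + l) := (s.1ᶜ).orderEmbOfFin
      (by rw [Finset.card_compl, s.2, Fintype.card_fin]; omega)
    prodLt n q z a b * embed a (A (z ∘ a)) * prodMid n q qbar z a b *
      embed b (B (z ∘ b)) * prodGt n q z a b

/-- Transport along an equality of the number of tensor factors. -/
def recastM {m m' : ℕ} (h : m = m') (M : Matrix (Idx n m) (Idx n m) K) :
    Matrix (Idx n m') (Idx n m') K := h ▸ M

/-- The unit `1 ∈ End(V^{⊗0})`. -/
def oneS : (Fin 0 → K) → Matrix (Idx n 0) (Idx n 0) K := fun _ => 1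

end Shuffle

/-- Good tuples of spectral parameters: nonzero, pairwise distinct, and
avoiding the poles `z_a q̄² = z_b` of `R̃`. -/
def GoodZ {K : Type*} [Field K] (qbar : K) {N : ℕ} (z : Fin N → K) : Prop :=
  (∀ a, z a ≠ 0) ∧ (∀ a b, a ≠ b → z a ≠ z b) ∧
    (∀ a b, a ≠ b → z a * qbar ^ 2 ≠ z b)

section Alg

variable {M : Type*} [Monoid M] {α : Type*} [LinearOrder α]

/-- ordered product along a list -/
def Row (U : α → M) (l : List α) : M := (l.map U).prod

def LtL (R : α → α → M) (a b : List α) : M :=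
  (b.map fun j => (a.reverse.map fun i => if i < j then R i j else 1).prod).prod

def GtL (R : α → α → M) (a b : List α) : M :=
  (b.map fun j => (a.reverse.map fun i => if j < i then R i j else 1).prod).prod

def MidL (T : α → α → M) (a b : List α) : M :=
  (a.map fun i => (b.reverse.map fun j => T i j).prod).prod

inductive Mrg : List α → List α → List α → Prop
  | nil : Mrg [] [] []
  | left (p : α) (a b m : List α) : (∀ x ∈ m, p < x) → Mrg a b m → Mrg (p :: a) b (p :: m)
  | right (p : α) (a b m : List α) : (∀ x ∈ m, p < x) → Mrg a b m → Mrg a (p :: b) (p :: m)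

inductive MrgT : List α → List α → List α → List α → List α → Prop
  | nil : MrgT [] [] [] [] []
  | one (p : α) (a b c ab bc : List α) : (∀ x ∈ a, p < x) → (∀ x ∈ b, p < x) →
      (∀ x ∈ c, p < x) → MrgT a b c ab bc → MrgT (p :: a) b c (p :: ab) bc
  | two (p : α) (a b c ab bc : List α) : (∀ x ∈ a, p < x) → (∀ x ∈ b, p < x) →
      (∀ x ∈ c, p < x) → MrgT a b c ab bc → MrgT a (p :: b) c (p :: ab) (p :: bc)
  | three (p : α) (a b c ab bc : List α) : (∀ x ∈ a, p < x) → (∀ x ∈ b, p < x) →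
      (∀ x ∈ c, p < x) → MrgT a b c ab bc → MrgT a b (p :: c) ab (p :: bc)

structure RelRT (R T : α → α → M) : Prop where
  rr : ∀ i j k l, i ≠ k → i ≠ l → j ≠ k → j ≠ l → Commute (R i j) (R k l)
  rt : ∀ i j k l, i ≠ k → i ≠ l → j ≠ k → j ≠ l → Commute (R i j) (T k l)
  tt : ∀ i j k l, i ≠ k → i ≠ l → j ≠ k → j ≠ l → Commute (T i j) (T k l)
  y1 : ∀ i j k, i ≠ j → i ≠ k → j ≠ k → R i j * R i k * R j k = R j k * R i k * R i j
  y2 : ∀ a b c, a ≠ b → a ≠ c → b ≠ c → R b c * T a b * T a c = T a c * T a b * R b c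
  y3 : ∀ a b c, a ≠ b → a ≠ c → b ≠ c → R a b * T b c * T a c = T a c * T b c * R a b

lemma Mrg.mem {a b m : List α} (h : Mrg a b m) (x : α) : x ∈ m ↔ x ∈ a ∨ x ∈ b := by
  induction h with
  | nil => simp
  | left p a b m hp h ih => simp [ih, or_assoc]
  | right p a b m hp h ih => simp [ih]; tauto

lemma MrgT.mem {a b c ab bc : List α} (h : MrgT a b c ab bc) (x : α) :
    (x ∈ ab ↔ x ∈ a ∨ x ∈ b) ∧ (x ∈ bc ↔ x ∈ b ∨ x ∈ c) := by
  induction h with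
  | nil => simp
  | one p a b c ab bc _ _ _ h ih => simp [ih, or_assoc]
  | two p a b c ab bc _ _ _ h ih => simp [ih, or_assoc]; tauto
  | three p a b c ab bc _ _ _ h ih => simp [ih]; tauto

lemma MrgT.toab {a b c ab bc : List α} (h : MrgT a b c ab bc) : Mrg a b ab := by
  induction h with
  | nil => exact .nil
  | one p a b c ab bc h1 h2 h3 h ih =>
    exact .left _ _ _ _ (fun x hx => by rcases (h.mem x).1.1 hx with h | h <;> simp_all) ih
  | two p a b c ab bc h1 h2 h3 h ih =>
    exact .right _ _ _ _ (fun x hx => by rcases (h.mem x).1.1 hx with h | h <;> simp_all) ih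
  | three p a b c ab bc _ _ _ h ih => exact ih

lemma MrgT.tobc {a b c ab bc : List α} (h : MrgT a b c ab bc) : Mrg b c bc := by
  induction h with
  | nil => exact .nil
  | one p a b c ab bc h1 h2 h3 h ih => exact ih
  | two p a b c ab bc h1 h2 h3 h ih =>
    exact .left _ _ _ _ (fun x hx => by rcases (h.mem x).2.1 hx with h | h <;> simp_all) ih
  | three p a b c ab bc h1 h2 h3 h ih =>
    exact .right _ _ _ _ (fun x hx => by rcases (h.mem x).2.1 hx with h | h <;> simp_all) ih

lemma MrgT.facts {a b c ab bc : List α} (h : MrgT a b c ab bc) :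
    a.Nodup ∧ b.Nodup ∧ c.Nodup ∧ (∀ x ∈ a, x ∉ b) ∧ (∀ x ∈ a, x ∉ c) ∧ (∀ x ∈ b, x ∉ c) := by
  induction h with
  | nil => simp
  | one p a b c ab bc h1 h2 h3 h ih => grind
  | two p a b c ab bc h1 h2 h3 h ih => grind
  | three p a b c ab bc h1 h2 h3 h ih => grind

@[simp] lemma Row_nil (U : α → M) : Row U [] = 1 := rfl
@[simp] lemma Row_cons (U : α → M) (p : α) (l : List α) : Row U (p :: l) = U p * Row U l := by
  simp [Row]
@[simp] lemma Row_append (U : α → M) (l l' : List α) : Row U (l ++ l') = Row U l * Row U l' := by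
  simp [Row]

lemma Row_comm {U : α → M} {l : List α} {x : M} (h : ∀ i ∈ l, Commute x (U i)) :
    Commute x (Row U l) := by
  apply Commute.list_prod_right
  simpa using h

lemma LtL_comm {R : α → α → M} {a b : List α} {x : M}
    (h : ∀ i ∈ a, ∀ j ∈ b, i < j → Commute x (R i j)) : Commute x (LtL R a b) := by
  apply Commute.list_prod_right
  simp only [List.mem_map, forall_exists_index, and_imp, forall_apply_eq_imp_iff₂]
  intro j hj
  apply Commute.list_prod_right
  simp only [List.mem_map, forall_exists_index, and_imp, forall_apply_eq_imp_iff₂, List.mem_reverse]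
  intro i hi
  split_ifs with hij
  · exact h i hi j hj hij
  · simp

lemma GtL_comm {R : α → α → M} {a b : List α} {x : M}
    (h : ∀ i ∈ a, ∀ j ∈ b, j < i → Commute x (R i j)) : Commute x (GtL R a b) := by
  apply Commute.list_prod_right
  simp only [List.mem_map, forall_exists_index, and_imp, forall_apply_eq_imp_iff₂]
  intro j hj
  apply Commute.list_prod_right
  simp only [List.mem_map, forall_exists_index, and_imp, forall_apply_eq_imp_iff₂, List.mem_reverse]
  intro i hi
  split_ifs with hij
  · exact h i hi j hj hij
  · simp

lemma MidL_comm {T : α → α → M} {a b : List α} {x : M}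
    (h : ∀ i ∈ a, ∀ j ∈ b, Commute x (T i j)) : Commute x (MidL T a b) := by
  apply Commute.list_prod_right
  simp only [List.mem_map, forall_exists_index, and_imp, forall_apply_eq_imp_iff₂]
  intro j hj
  apply Commute.list_prod_right
  simp only [List.mem_map, forall_exists_index, and_imp, forall_apply_eq_imp_iff₂, List.mem_reverse]
  intro i hi
  exact h j hj i hi

@[simp] lemma LtL_nil_right (R : α → α → M) (a : List α) : LtL R a [] = 1 := rfl
@[simp] lemma GtL_nil_right (R : α → α → M) (a : List α) : GtL R a [] = 1 := rfl
@[simp] lemma LtL_nil_left (R : α → α → M) (a : List α) : LtL R [] a = 1 := by simp [LtL]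
@[simp] lemma GtL_nil_left (R : α → α → M) (a : List α) : GtL R [] a = 1 := by simp [GtL]
@[simp] lemma MidL_nil_left (R : α → α → M) (a : List α) : MidL R [] a = 1 := rfl
@[simp] lemma MidL_nil_right (R : α → α → M) (a : List α) : MidL R a [] = 1 := by simp [MidL]

lemma LtL_cons_right' (R : α → α → M) (a b : List α) (p : α) :
    LtL R a (p :: b) = (a.reverse.map fun i => if i < p then R i p else 1).prod * LtL R a b := by
  simp [LtL]

lemma LtL_cons_right (R : α → α → M) (a b : List α) (p : α) (h : ∀ x ∈ a, p < x) :
    LtL R a (p :: b) = LtL R a b := by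
  rw [LtL_cons_right']
  have : (a.reverse.map fun i => if i < p then R i p else 1) = a.reverse.map fun _ => (1 : M) := by
    apply List.map_congr_left
    intro x hx
    rw [if_neg (not_lt.2 (h x (by simpa using hx)).le)]
  rw [this]; simp

lemma GtL_cons_right (R : α → α → M) (a b : List α) (p : α) (h : ∀ x ∈ a, p < x) :
    GtL R a (p :: b) = Row (fun i => R i p) a.reverse * GtL R a b := by
  simp only [GtL, Row, List.map_cons, List.prod_cons]
  congr 2
  apply List.map_congr_left
  intro x hx
  rw [if_pos (h x (by simpa using hx))]

lemma GtL_cons_left (R : α → α → M) (a b : List α) (p : α) (h : ∀ x ∈ b, p < x) :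
    GtL R (p :: a) b = GtL R a b := by
  simp only [GtL]
  congr 1
  apply List.map_congr_left
  intro x hx
  simp [not_lt.2 (h x hx).le]

lemma MidL_cons_left (T : α → α → M) (a b : List α) (p : α) :
    MidL T (p :: a) b = Row (T p) b.reverse * MidL T a b := by
  simp [MidL, Row]

variable {R T : α → α → M}

lemma LtL_cons_left (H : RelRT R T) (a b : List α) (p : α) (h : ∀ x ∈ b, p < x) (ha : ∀ x ∈ a, p < x)
    (hb : b.Nodup) (hab : ∀ x ∈ a, x ∉ b) :
    LtL R (p :: a) b = LtL R a b * Row (R p) b := by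
  induction b with
  | nil => simp
  | cons j b ih =>
    rw [LtL_cons_right', LtL_cons_right', ih (by grind) (by grind) (by grind)]
    have hj : p < j := h j (by simp)
    have hc : Commute (R p j) (LtL R a b) := LtL_comm fun i hi k hk hik =>
      H.rr _ _ _ _ (by grind) (by grind) (by grind) (by grind)
    simp only [List.reverse_cons, List.map_append, List.prod_append, List.map_cons, List.map_nil,
      List.prod_cons, List.prod_nil, mul_one, if_pos hj, Row_cons, mul_assoc]
    rw [← mul_assoc (R p j), hc.eq, mul_assoc]

lemma MidL_cons_right (H : RelRT R T) (a b : List α) (p : α) (hpa : p ∉ a) (hpb : p ∉ b)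
    (ha : a.Nodup) (hab : ∀ x ∈ a, x ∉ b) :
    MidL T a (p :: b) = MidL T a b * Row (fun i => T i p) a := by
  induction a with
  | nil => simp
  | cons j a ih =>
    rw [MidL_cons_left, MidL_cons_left, ih (by grind) (by grind) (by grind)]
    have hc : Commute (T j p) (MidL T a b) := MidL_comm fun i hi k hk =>
      H.tt _ _ _ _ (by grind) (by grind) (by grind) (by grind)
    simp only [List.reverse_cons, Row_append, Row_cons, Row_nil, mul_one, mul_assoc]
    rw [← mul_assoc (T j p), hc.eq, mul_assoc]


/-- `U` behaves like a row or column through the point `p`. -/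
def Loc (R : α → α → M) (U : α → M) (p : α) : Prop :=
  ∀ i j k, i ≠ p → j ≠ p → k ≠ p → i ≠ j → i ≠ k → Commute (U i) (R j k)

lemma asw {x y z w : M} (h : x * y = z * w) (t : M) : x * (y * t) = z * (w * t) := by
  rw [← mul_assoc, h, mul_assoc]

lemma row1_aux (H : RelRT R T) (U : α → M) (p r : α) (c : List α) (hr : r ∉ c) (hn : c.Nodup)
    (hrp : r ≠ p) (hcp : p ∉ c) (hU : Loc R U p)
    (hY : ∀ r s, r ≠ p → s ≠ p → r ≠ s → U r * U s * R r s = R r s * U s * U r) :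
    U r * Row U c * Row (R r) c = Row (R r) c * Row U c * U r := by
  induction c with
  | nil => simp
  | cons s c ih =>
    have ih := ih (by grind) (by grind) (by grind)
    have h1 : Commute (R r s) (Row U c) := Row_comm fun i hi =>
      (hU _ _ _ (by grind) (by grind) (by grind) (by grind) (by grind)).symm
    have h2 : Commute (U s) (Row (R r) c) := Row_comm fun i hi =>
      (hU _ _ _ (by grind) (by grind) (by grind) (by grind) (by grind))
    have h3 := hY r s hrp (by grind) (by grind)
    simp only [Row_cons]
    calc U r * (U s * Row U c) * (R r s * Row (R r) c)
        = U r * U s * (Row U c * R r s) * Row (R r) c := by simp only [mul_assoc]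
      _ = U r * U s * R r s * Row U c * Row (R r) c := by rw [← h1.eq]; simp only [mul_assoc]
      _ = R r s * U s * (U r * Row U c * Row (R r) c) := by rw [h3]; simp only [mul_assoc]
      _ = R r s * (U s * Row (R r) c) * Row U c * U r := by rw [ih]; simp only [mul_assoc]
      _ = _ := by rw [h2.eq]; simp only [mul_assoc]

lemma row2_aux (H : RelRT R T) (U : α → M) (p r : α) (c : List α) (hr : r ∉ c) (hn : c.Nodup)
    (hrp : r ≠ p) (hcp : p ∉ c) (hU : Loc R U p)
    (hY : ∀ r s, r ≠ p → s ≠ p → r ≠ s → U s * U r * R r s = R r s * U r * U s) :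
    Row U c.reverse * U r * Row (R r) c = Row (R r) c * U r * Row U c.reverse := by
  induction c with
  | nil => simp
  | cons s c ih =>
    have ih := ih (by grind) (by grind) (by grind)
    have h1 : Commute (R r s) (Row U c.reverse) := Row_comm fun i hi =>
      (hU _ _ _ (by grind) (by grind) (by grind) (by grind) (by grind)).symm
    have h2 : Commute (U s) (Row (R r) c) := Row_comm fun i hi =>
      (hU _ _ _ (by grind) (by grind) (by grind) (by grind) (by grind))
    have h3 := hY r s hrp (by grind) (by grind)
    simp only [Row_cons, List.reverse_cons, Row_append, Row_nil, mul_one]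
    calc Row U c.reverse * U s * U r * (R r s * Row (R r) c)
        = Row U c.reverse * (U s * U r * R r s) * Row (R r) c := by simp only [mul_assoc]
      _ = Row U c.reverse * R r s * U r * (U s * Row (R r) c) := by rw [h3]; simp only [mul_assoc]
      _ = R r s * (Row U c.reverse * U r * Row (R r) c) * U s := by
          rw [h2.eq, ← h1.eq]; simp only [mul_assoc]
      _ = _ := by rw [ih]; simp only [mul_assoc]

lemma row3_aux (H : RelRT R T) (U : α → M) (p r : α) (c : List α) (hr : r ∉ c) (hn : c.Nodup)
    (hrp : r ≠ p) (hcp : p ∉ c) (hU : Loc R U p)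
    (hY : ∀ r s, r ≠ p → s ≠ p → r ≠ s → R s r * U r * U s = U s * U r * R s r) :
    Row (fun i => R i r) c.reverse * U r * Row U c =
      Row U c * U r * Row (fun i => R i r) c.reverse := by
  induction c with
  | nil => simp
  | cons s c ih =>
    have ih := ih (by grind) (by grind) (by grind)
    have h1 : Commute (R s r) (Row U c) := Row_comm fun i hi =>
      (hU _ _ _ (by grind) (by grind) (by grind) (by grind) (by grind)).symm
    have h2 : Commute (U s) (Row (fun i => R i r) c.reverse) := Row_comm fun i hi =>
      (hU _ _ _ (by grind) (by grind) (by grind) (by grind) (by grind))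
    have h3 := hY r s hrp (by grind) (by grind)
    simp only [Row_cons, List.reverse_cons, Row_append, Row_nil, mul_one]
    calc Row (fun i => R i r) c.reverse * R s r * U r * (U s * Row U c)
        = Row (fun i => R i r) c.reverse * (R s r * U r * U s) * Row U c := by
          simp only [mul_assoc]
      _ = (Row (fun i => R i r) c.reverse * U s) * U r * (R s r * Row U c) := by
          rw [h3]; simp only [mul_assoc]
      _ = U s * (Row (fun i => R i r) c.reverse * U r * Row U c) * R s r := by
          rw [← h2.eq, h1.eq]; simp only [mul_assoc]
      _ = _ := by rw [ih]; simp only [mul_assoc]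

lemma row4_aux (H : RelRT R T) (U : α → M) (p r : α) (c : List α) (hr : r ∉ c) (hn : c.Nodup)
    (hrp : r ≠ p) (hcp : p ∉ c) (hU : Loc R U p)
    (hY : ∀ r s, r ≠ p → s ≠ p → r ≠ s → R s r * U s * U r = U r * U s * R s r) :
    Row (fun i => R i r) c.reverse * Row U c.reverse * U r =
      U r * Row U c.reverse * Row (fun i => R i r) c.reverse := by
  induction c with
  | nil => simp
  | cons s c ih =>
    have ih := ih (by grind) (by grind) (by grind)
    have h1 : Commute (R s r) (Row U c.reverse) := Row_comm fun i hi =>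
      (hU _ _ _ (by grind) (by grind) (by grind) (by grind) (by grind)).symm
    have h2 : Commute (U s) (Row (fun i => R i r) c.reverse) := Row_comm fun i hi =>
      (hU _ _ _ (by grind) (by grind) (by grind) (by grind) (by grind))
    have h3 := hY r s hrp (by grind) (by grind)
    simp only [Row_cons, List.reverse_cons, Row_append, Row_nil, mul_one]
    calc Row (fun i => R i r) c.reverse * R s r * (Row U c.reverse * U s) * U r
        = Row (fun i => R i r) c.reverse * (R s r * Row U c.reverse) * U s * U r := by
          simp only [mul_assoc]
      _ = Row (fun i => R i r) c.reverse * Row U c.reverse * (R s r * U s * U r) := by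
          rw [h1.eq]; simp only [mul_assoc]
      _ = (Row (fun i => R i r) c.reverse * Row U c.reverse * U r) * U s * R s r := by
          rw [h3]; simp only [mul_assoc]
      _ = U r * Row U c.reverse * (Row (fun i => R i r) c.reverse * U s) * R s r := by
          rw [ih]; simp only [mul_assoc]
      _ = _ := by rw [← h2.eq]; simp only [mul_assoc]

lemma Mrg.facts {a b m : List α} (h : Mrg a b m) :
    a.Nodup ∧ b.Nodup ∧ (∀ x ∈ a, x ∉ b) := by
  induction h with
  | nil => simp
  | left p a b m hp h ih => have := h.mem; grind
  | right p a b m hp h ih => have := h.mem; grind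

lemma row1 (H : RelRT R T) (U : α → M) (p : α) {b c m : List α} (h : Mrg b c m) (hp : p ∉ m)
    (hU : Loc R U p)
    (hY : ∀ r s, r ≠ p → s ≠ p → r ≠ s → U r * U s * R r s = R r s * U s * U r) :
    Row U m * LtL R b c = LtL R b c * Row U c * Row U b := by
  induction h with
  | nil => simp
  | left r b c m hr h ih =>
    have ih := ih (by grind)
    have hm := h.mem
    obtain ⟨f1, f2, f3⟩ := h.facts
    have aux := row1_aux H U p r c (by grind) f2 (by grind) (by grind) hU hY
    rw [LtL_cons_left H b c r (by grind) (by grind) f2 f3]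
    have h1 : Commute (U r) (LtL R b c) := LtL_comm fun i hi j hj _ =>
      hU _ _ _ (by grind) (by grind) (by grind) (by grind) (by grind)
    have h2 : Commute (Row U b) (Row (R r) c) := Row_comm fun i hi =>
      (Row_comm fun j hj =>
       (hU _ _ _ (by grind) (by grind) (by grind) (by grind) (by grind)).symm).symm
    simp only [Row_cons]
    calc U r * Row U m * (LtL R b c * Row (R r) c)
        = U r * (Row U m * LtL R b c) * Row (R r) c := by simp only [mul_assoc]
      _ = (U r * LtL R b c) * Row U c * (Row U b * Row (R r) c) := by
        rw [ih]; simp only [mul_assoc]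
      _ = LtL R b c * (U r * Row U c * Row (R r) c) * Row U b := by
        rw [h1.eq, h2.eq]; simp only [mul_assoc]
      _ = _ := by rw [aux]; simp only [mul_assoc]
  | right r b c m hr h ih =>
    have ih := ih (by grind)
    have hm := h.mem
    obtain ⟨f1, f2, f3⟩ := h.facts
    rw [LtL_cons_right R b c r (by grind)]
    have h1 : Commute (U r) (LtL R b c) := LtL_comm fun i hi j hj _ =>
      hU _ _ _ (by grind) (by grind) (by grind) (by grind) (by grind)
    simp only [Row_cons]
    rw [mul_assoc, ih, mul_assoc, ← mul_assoc (U r), h1.eq]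
    simp only [mul_assoc]

lemma row2 (H : RelRT R T) (U : α → M) (p : α) {b c m : List α} (h : Mrg b c m) (hp : p ∉ m)
    (hU : Loc R U p)
    (hY : ∀ r s, r ≠ p → s ≠ p → r ≠ s → U s * U r * R r s = R r s * U r * U s) :
    Row U m.reverse * LtL R b c = LtL R b c * Row U b.reverse * Row U c.reverse := by
  induction h with
  | nil => simp
  | left r b c m hr h ih =>
    have ih := ih (by grind)
    have hm := h.mem
    obtain ⟨f1, f2, f3⟩ := h.facts
    have aux := row2_aux H U p r c (by grind) f2 (by grind) (by grind) hU hY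
    rw [LtL_cons_left H b c r (by grind) (by grind) f2 f3]
    have h1 : Commute (U r) (LtL R b c) := LtL_comm fun i hi j hj _ =>
      hU _ _ _ (by grind) (by grind) (by grind) (by grind) (by grind)
    have h2 : Commute (Row U b.reverse) (Row (R r) c) := Row_comm fun i hi =>
      (Row_comm fun j hj =>
       (hU _ _ _ (by grind) (by grind) (by grind) (by grind) (by grind)).symm).symm
    simp only [Row_cons, List.reverse_cons, Row_append, Row_nil, mul_one]
    calc Row U m.reverse * U r * (LtL R b c * Row (R r) c)
        = Row U m.reverse * (U r * LtL R b c) * Row (R r) c := by simp only [mul_assoc]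
      _ = (Row U m.reverse * LtL R b c) * U r * Row (R r) c := by
        rw [h1.eq]; simp only [mul_assoc]
      _ = LtL R b c * Row U b.reverse * (Row U c.reverse * U r * Row (R r) c) := by
        rw [ih]; simp only [mul_assoc]
      _ = LtL R b c * (Row U b.reverse * Row (R r) c) * U r * Row U c.reverse := by
        rw [aux]; simp only [mul_assoc]
      _ = _ := by rw [h2.eq]; simp only [mul_assoc]
  | right r b c m hr h ih =>
    have ih := ih (by grind)
    have hm := h.mem
    obtain ⟨f1, f2, f3⟩ := h.facts
    rw [LtL_cons_right R b c r (by grind)]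
    have h1 : Commute (U r) (LtL R b c) := LtL_comm fun i hi j hj _ =>
      hU _ _ _ (by grind) (by grind) (by grind) (by grind) (by grind)
    simp only [Row_cons, List.reverse_cons, Row_append, Row_nil, mul_one]
    rw [mul_assoc, h1.eq, ← mul_assoc, ih]
    simp only [mul_assoc]

lemma row3 (H : RelRT R T) (U : α → M) (p : α) {b c m : List α} (h : Mrg b c m) (hp : p ∉ m)
    (hU : Loc R U p)
    (hY : ∀ r s, r ≠ p → s ≠ p → r ≠ s → R s r * U r * U s = U s * U r * R s r) :
    GtL R b c * Row U m = Row U b * Row U c * GtL R b c := by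
  induction h with
  | nil => simp
  | left r b c m hr h ih =>
    have ih := ih (by grind)
    have hm := h.mem
    obtain ⟨f1, f2, f3⟩ := h.facts
    rw [GtL_cons_left R b c r (by grind)]
    have h1 : Commute (U r) (GtL R b c) := GtL_comm fun i hi j hj _ =>
      hU _ _ _ (by grind) (by grind) (by grind) (by grind) (by grind)
    simp only [Row_cons]
    rw [← mul_assoc, ← h1.eq, mul_assoc, ih]
    simp only [mul_assoc]
  | right r b c m hr h ih =>
    have ih := ih (by grind)
    have hm := h.mem
    obtain ⟨f1, f2, f3⟩ := h.facts
    have aux := row3_aux H U p r b (by grind) f1 (by grind) (by grind) hU hY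
    rw [GtL_cons_right R b c r (by grind)]
    have h1 : Commute (U r) (GtL R b c) := GtL_comm fun i hi j hj _ =>
      hU _ _ _ (by grind) (by grind) (by grind) (by grind) (by grind)
    have h2 : Commute (Row U c) (Row (fun i => R i r) b.reverse) := Row_comm fun i hi =>
      (Row_comm fun j hj =>
       (hU _ _ _ (by grind) (by grind) (by grind) (by grind) (by grind)).symm).symm
    simp only [Row_cons]
    calc Row (fun i => R i r) b.reverse * GtL R b c * (U r * Row U m)
        = Row (fun i => R i r) b.reverse * (GtL R b c * U r) * Row U m := by
          simp only [mul_assoc]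
      _ = Row (fun i => R i r) b.reverse * U r * (GtL R b c * Row U m) := by
          rw [← h1.eq]; simp only [mul_assoc]
      _ = (Row (fun i => R i r) b.reverse * U r * Row U b) * Row U c * GtL R b c := by
          rw [ih]; simp only [mul_assoc]
      _ = Row U b * U r * (Row (fun i => R i r) b.reverse * Row U c) * GtL R b c := by
          rw [aux]; simp only [mul_assoc]
      _ = _ := by rw [← h2.eq]; simp only [mul_assoc]

lemma row4 (H : RelRT R T) (U : α → M) (p : α) {b c m : List α} (h : Mrg b c m) (hp : p ∉ m)
    (hU : Loc R U p)
    (hY : ∀ r s, r ≠ p → s ≠ p → r ≠ s → R s r * U s * U r = U r * U s * R s r) :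
    GtL R b c * Row U m.reverse = Row U c.reverse * Row U b.reverse * GtL R b c := by
  induction h with
  | nil => simp
  | left r b c m hr h ih =>
    have ih := ih (by grind)
    have hm := h.mem
    obtain ⟨f1, f2, f3⟩ := h.facts
    rw [GtL_cons_left R b c r (by grind)]
    have h1 : Commute (U r) (GtL R b c) := GtL_comm fun i hi j hj _ =>
      hU _ _ _ (by grind) (by grind) (by grind) (by grind) (by grind)
    simp only [Row_cons, List.reverse_cons, Row_append, Row_nil, mul_one]
    rw [← mul_assoc, ih, mul_assoc, ← h1.eq]
    simp only [mul_assoc]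
  | right r b c m hr h ih =>
    have ih := ih (by grind)
    have hm := h.mem
    obtain ⟨f1, f2, f3⟩ := h.facts
    have aux := row4_aux H U p r b (by grind) f1 (by grind) (by grind) hU hY
    rw [GtL_cons_right R b c r (by grind)]
    have h1 : Commute (U r) (GtL R b c) := GtL_comm fun i hi j hj _ =>
      hU _ _ _ (by grind) (by grind) (by grind) (by grind) (by grind)
    have h2 : Commute (Row U c.reverse) (Row (fun i => R i r) b.reverse) := Row_comm fun i hi =>
      (Row_comm fun j hj =>
       (hU _ _ _ (by grind) (by grind) (by grind) (by grind) (by grind)).symm).symm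
    simp only [Row_cons, List.reverse_cons, Row_append, Row_nil, mul_one]
    calc Row (fun i => R i r) b.reverse * GtL R b c * (Row U m.reverse * U r)
        = Row (fun i => R i r) b.reverse * (GtL R b c * Row U m.reverse) * U r := by
          simp only [mul_assoc]
      _ = (Row (fun i => R i r) b.reverse * Row U c.reverse) * Row U b.reverse *
            (GtL R b c * U r) := by
          rw [ih]; simp only [mul_assoc]
      _ = Row U c.reverse * (Row (fun i => R i r) b.reverse * Row U b.reverse * U r) *
            GtL R b c := by
          rw [← h2.eq, ← h1.eq]; simp only [mul_assoc]
      _ = _ := by rw [aux]; simp only [mul_assoc]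

lemma locR (H : RelRT R T) (p : α) : Loc R (R p) p := fun i j k h1 h2 h3 h4 h5 =>
  H.rr _ _ _ _ h2.symm h3.symm h4 h5
lemma locR' (H : RelRT R T) (p : α) : Loc R (fun i => R i p) p := fun i j k h1 h2 h3 h4 h5 =>
  H.rr _ _ _ _ h4 h5 h2.symm h3.symm
lemma locT (H : RelRT R T) (p : α) : Loc R (T p) p := fun i j k h1 h2 h3 h4 h5 =>
  (H.rt _ _ _ _ h2 h4.symm h3 h5.symm).symm
lemma locT' (H : RelRT R T) (p : α) : Loc R (fun i => T i p) p := fun i j k h1 h2 h3 h4 h5 =>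
  (H.rt _ _ _ _ h4.symm h2 h5.symm h3).symm

/-- (I) -/
lemma claim1 (H : RelRT R T) {a b c ab bc : List α} (h : MrgT a b c ab bc) :
    LtL R ab c * LtL R a b = LtL R a bc * LtL R b c := by
  induction h with
  | nil => simp
  | one p a b c ab bc h1 h2 h3 h ih =>
    have hm := h.mem
    obtain ⟨f1, f2, f3, f4, f5, f6⟩ := h.facts
    have nbc : bc.Nodup := by
      clear * - h
      induction h with
      | nil => simp
      | one p a b c ab bc h1 h2 h3 h ih => exact ih
      | two p a b c ab bc h1 h2 h3 h ih => have := h.mem; grind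
      | three p a b c ab bc h1 h2 h3 h ih => have := h.mem; grind
    rw [LtL_cons_left H ab c p (by grind) (by grind) f3 (by grind),
      LtL_cons_left H a b p (by grind) (by grind) f2 (by grind),
      LtL_cons_left H a bc p (by grind) (by grind) nbc (by grind)]
    have r1 := row1 H (R p) p h.tobc (by grind) (locR H p)
      (fun r s hr hs hrs => H.y1 _ _ _ hr.symm hs.symm hrs)
    have c1 : Commute (Row (R p) c) (LtL R a b) := LtL_comm fun i hi j hj _ =>
      (Row_comm fun k hk => H.rr _ _ _ _ (by grind) (by grind) (by grind) (by grind)).symm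
    calc LtL R ab c * Row (R p) c * (LtL R a b * Row (R p) b)
        = LtL R ab c * (Row (R p) c * LtL R a b) * Row (R p) b := by simp only [mul_assoc]
      _ = (LtL R ab c * LtL R a b) * Row (R p) c * Row (R p) b := by
        rw [c1.eq]; simp only [mul_assoc]
      _ = LtL R a bc * (LtL R b c * Row (R p) c * Row (R p) b) := by
        rw [ih]; simp only [mul_assoc]
      _ = _ := by rw [← r1]; simp only [mul_assoc]
  | two p a b c ab bc h1 h2 h3 h ih =>
    have hm := h.mem
    obtain ⟨f1, f2, f3, f4, f5, f6⟩ := h.facts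
    rw [LtL_cons_left H ab c p (by grind) (by grind) f3 (by grind),
      LtL_cons_right _ a b p (by grind), LtL_cons_right _ a bc p (by grind),
      LtL_cons_left H b c p (by grind) (by grind) f3 (by grind)]
    have c1 : Commute (Row (R p) c) (LtL R a b) := LtL_comm fun i hi j hj _ =>
      (Row_comm fun k hk => H.rr _ _ _ _ (by grind) (by grind) (by grind) (by grind)).symm
    rw [mul_assoc, c1.eq, ← mul_assoc, ih, mul_assoc]
  | three p a b c ab bc h1 h2 h3 h ih =>
    have hm := h.mem
    rw [LtL_cons_right _ ab c p (by grind), LtL_cons_right _ a bc p (by grind),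
      LtL_cons_right _ b c p (by grind), ih]

/-- (IV) -/
lemma claim4 (H : RelRT R T) {a b c ab bc : List α} (h : MrgT a b c ab bc) :
    GtL R a b * GtL R ab c = GtL R b c * GtL R a bc := by
  induction h with
  | nil => simp
  | one p a b c ab bc h1 h2 h3 h ih =>
    have hm := h.mem
    rw [GtL_cons_left _ a b p (by grind), GtL_cons_left _ ab c p (by grind),
      GtL_cons_left _ a bc p (by grind), ih]
  | two p a b c ab bc h1 h2 h3 h ih =>
    have hm := h.mem
    obtain ⟨f1, f2, f3, f4, f5, f6⟩ := h.facts
    rw [GtL_cons_right _ a b p (by grind), GtL_cons_left _ ab c p (by grind),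
      GtL_cons_left _ b c p (by grind), GtL_cons_right _ a bc p (by grind)]
    have c1 : Commute (Row (fun i => R i p) a.reverse) (GtL R b c) := GtL_comm fun i hi j hj _ =>
      (Row_comm fun k hk => H.rr _ _ _ _ (by grind) (by grind) (by grind) (by grind)).symm
    rw [mul_assoc, ih, ← mul_assoc, c1.eq, mul_assoc]
  | three p a b c ab bc h1 h2 h3 h ih =>
    have hm := h.mem
    obtain ⟨f1, f2, f3, f4, f5, f6⟩ := h.facts
    rw [GtL_cons_right _ ab c p (by grind), GtL_cons_right _ b c p (by grind),
      GtL_cons_right _ a bc p (by grind)]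
    have r1 := row4 H (fun i => R i p) p h.toab (by grind) (locR' H p)
      (fun r s hr hs hrs => H.y1 _ _ _ hrs.symm hs hr)
    have c1 : Commute (Row (fun i => R i p) a.reverse) (GtL R b c) := GtL_comm fun i hi j hj _ =>
      (Row_comm fun k hk => H.rr _ _ _ _ (by grind) (by grind) (by grind) (by grind)).symm
    rw [← mul_assoc, r1, mul_assoc, ih, mul_assoc, ← mul_assoc _ (GtL R b c), c1.eq]
    simp only [mul_assoc]

/-- (III) -/
lemma claim3 (H : RelRT R T) {a b c bc : List α} (h : Mrg b c bc) (ha : a.Nodup)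
    (hd : ∀ x ∈ a, x ∉ bc) :
    MidL T a bc * LtL R b c = LtL R b c * (MidL T a b * MidL T a c) := by
  have hm := h.mem
  obtain ⟨f1, f2, f3⟩ := h.facts
  induction a with
  | nil => simp
  | cons p a ih =>
    have ih := ih (by grind) (by grind)
    simp only [MidL_cons_left]
    have r1 := row2 H (T p) p h (by grind) (locT H p)
      (fun r s hr hs hrs => by rw [H.y2 p r s hr.symm hs.symm hrs])
    have c1 : Commute (Row (T p) c.reverse) (MidL T a b) := MidL_comm fun i hi j hj =>
      (Row_comm fun k hk => H.tt _ _ _ _ (by grind) (by grind) (by grind) (by grind)).symm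
    calc Row (T p) bc.reverse * MidL T a bc * LtL R b c
        = (Row (T p) bc.reverse * LtL R b c) * (MidL T a b * MidL T a c) := by
          rw [mul_assoc, ih]; simp only [mul_assoc]
      _ = LtL R b c * Row (T p) b.reverse * (Row (T p) c.reverse * MidL T a b) * MidL T a c := by
          rw [r1]; simp only [mul_assoc]
      _ = _ := by rw [c1.eq]; simp only [mul_assoc]

/-- (II) -/
lemma claim2 (H : RelRT R T) {a b c ab : List α} (h : Mrg a b ab) (hn : ab.Nodup) (hc : c.Nodup)
    (hd : ∀ x ∈ c, x ∉ ab) :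
    GtL R a b * MidL T ab c = MidL T a c * MidL T b c * GtL R a b := by
  have hm := h.mem
  obtain ⟨f1, f2, f3⟩ := h.facts
  induction c with
  | nil => simp
  | cons p c ih =>
    have ih := ih (by grind) (by grind)
    rw [MidL_cons_right H ab c p (by grind) (by grind) hn (by grind),
      MidL_cons_right H a c p (by grind) (by grind) f1 (by grind),
      MidL_cons_right H b c p (by grind) (by grind) f2 (by grind)]
    have r1 := row3 H (fun i => T i p) p h (by grind) (locT' H p)
      (fun r s hr hs hrs => by rw [H.y3 s r p hrs.symm hs hr])
    have c1 : Commute (Row (fun i => T i p) a) (MidL T b c) := MidL_comm fun i hi j hj =>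
      (Row_comm fun k hk => H.tt _ _ _ _ (by grind) (by grind) (by grind) (by grind)).symm
    calc GtL R a b * (MidL T ab c * Row (fun i => T i p) ab)
        = MidL T a c * MidL T b c * (GtL R a b * Row (fun i => T i p) ab) := by
          rw [← mul_assoc, ih]; simp only [mul_assoc]
      _ = MidL T a c * (MidL T b c * Row (fun i => T i p) a) * Row (fun i => T i p) b *
            GtL R a b := by
          rw [r1]; simp only [mul_assoc]
      _ = _ := by rw [← c1.eq]; simp only [mul_assoc]

lemma Mrg.nodup {a b m : List α} (h : Mrg a b m) : m.Nodup := by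
  induction h with
  | nil => simp
  | left p a b m hp h ih => grind
  | right p a b m hp h ih => grind

/-- Termwise associativity. -/
lemma termwise (H : RelRT R T) {a b c ab bc : List α} (h : MrgT a b c ab bc) (A B C : M)
    (hA : ∀ i ∉ a, ∀ j ∉ a, Commute A (R i j))
    (hB : ∀ i ∉ b, ∀ j ∉ b, Commute B (T i j))
    (hC : ∀ i ∉ c, ∀ j ∉ c, Commute C (R i j)) :
    LtL R ab c * (LtL R a b * A * MidL T a b * B * GtL R a b) * MidL T ab c * C * GtL R ab c =
    LtL R a bc * A * MidL T a bc * (LtL R b c * B * MidL T b c * C * GtL R b c) * GtL R a bc := by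
  obtain ⟨f1, f2, f3, f4, f5, f6⟩ := h.facts
  have hm := h.mem
  have e1 := claim1 H h
  have e4 := claim4 H h
  have e2 := claim2 H (c := c) h.toab h.toab.nodup f3 (by grind)
  have e3 := claim3 H (a := a) h.tobc f1 (by grind)
  have cA : Commute A (LtL R b c) := LtL_comm fun i hi j hj _ => hA _ (by grind) _ (by grind)
  have cB : Commute B (MidL T a c) := MidL_comm fun i hi j hj => hB _ (by grind) _ (by grind)
  have cC : Commute C (GtL R a b) := GtL_comm fun i hi j hj _ => hC _ (by grind) _ (by grind)
  calc _ = (LtL R ab c * LtL R a b) * A * MidL T a b * B * (GtL R a b * MidL T ab c) * C *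
            GtL R ab c := by simp only [mul_assoc]
    _ = LtL R a bc * (LtL R b c * A) * MidL T a b * (B * MidL T a c) * MidL T b c *
          (GtL R a b * C) * GtL R ab c := by rw [e1, e2]; simp only [mul_assoc]
    _ = LtL R a bc * A * (LtL R b c * (MidL T a b * MidL T a c)) * B * MidL T b c *
          C * (GtL R a b * GtL R ab c) := by
          rw [← cA.eq, cB.eq, ← cC.eq]; simp only [mul_assoc]
    _ = _ := by rw [← e3, e4]; simp only [mul_assoc]

end Alg
section Mat
variable {K : Type*} [Field K] {n : ℕ}

lemma embed_apply {k N : ℕ} (ι : Fin k → Fin N) (X : Matrix (Idx n k) (Idx n k) K)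
    (f g : Idx n N) : embed ι X f g =
      if (∀ b, (∀ i, ι i ≠ b) → f b = g b) then X (f ∘ ι) (g ∘ ι) else 0 := by
  unfold embed
  split_ifs with h
  · rw [Finset.prod_eq_one, mul_one]
    intro b _
    split_ifs with h1 h2
    · rfl
    · rfl
    · exact absurd (h b (by simpa using h1)) h2
  · push Not at h
    obtain ⟨b, hb, hne⟩ := h
    rw [Finset.prod_eq_zero (Finset.mem_univ b), mul_zero]
    rw [if_neg (by simpa using hb), if_neg hne]

lemma embed_mul {k N : ℕ} (ι : Fin k → Fin N) (hι : Function.Injective ι)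
    (X Y : Matrix (Idx n k) (Idx n k) K) : embed ι (X * Y) = embed ι X * embed ι Y := by
  ext f g
  rw [embed_apply, Matrix.mul_apply, Matrix.mul_apply]
  have ext_comp : ∀ w : Idx n k, Function.extend ι w f ∘ ι = w := fun w => by
    funext i; simp [hι.extend_apply]
  have ext_off : ∀ w : Idx n k, ∀ b, (∀ i, ι i ≠ b) → Function.extend ι w f b = f b :=
    fun w b hb => Function.extend_apply' _ _ _ (by simpa using hb)
  have key : ∑ w : Idx n k, (if (∀ b, (∀ i, ι i ≠ b) → f b = g b) then
      X (f ∘ ι) w * Y w (g ∘ ι) else 0) = ∑ h : Idx n N, embed ι X f h * embed ι Y h g := by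
    apply Finset.sum_of_injOn (fun w => Function.extend ι w f)
    · intro w _ w' _ h
      have := congrArg (· ∘ ι) h
      simpa [ext_comp] using this
    · simp
    · intro h _ hh
      rw [embed_apply, if_neg, zero_mul]
      intro hb
      apply hh
      refine ⟨h ∘ ι, by simp, ?_⟩
      funext b
      by_cases hb' : ∃ i, ι i = b
      · obtain ⟨i, rfl⟩ := hb'
        simp [hι.extend_apply]
      · push Not at hb'
        simp only
        rw [ext_off _ _ hb', hb b hb']
    · intro w _
      rw [embed_apply, embed_apply, if_pos (fun b hb => (ext_off w b hb).symm), ext_comp]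
      by_cases hc : ∀ b, (∀ i, ι i ≠ b) → f b = g b
      · rw [if_pos hc, if_pos (fun b hb => by rw [ext_off w b hb, hc b hb])]
      · rw [if_neg hc, if_neg, mul_zero]
        intro h
        exact hc fun b hb => by rw [← h b hb, ext_off w b hb]
  rw [← key]
  split_ifs <;> simp

lemma embed_one {k N : ℕ} (ι : Fin k → Fin N) :
    embed ι (1 : Matrix (Idx n k) (Idx n k) K) = 1 := by
  ext f g
  rw [embed_apply, Matrix.one_apply, Matrix.one_apply]
  by_cases h : f = g
  · subst h; simp
  · rw [if_neg h]
    split_ifs with h1 h2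
    · exfalso
      apply h
      funext b
      by_cases hb' : ∃ i, ι i = b
      · obtain ⟨i, rfl⟩ := hb'
        exact congrFun h2 i
      · push Not at hb'
        exact h1 b hb'
    · rfl
    · rfl

lemma embed_comp {k M N : ℕ} (ι : Fin M → Fin N) (hι : Function.Injective ι) (κ : Fin k → Fin M)
    (X : Matrix (Idx n k) (Idx n k) K) : embed ι (embed κ X) = embed (ι ∘ κ) X := by
  ext f g
  rw [embed_apply, embed_apply, embed_apply]
  rw [← ite_and]
  congr 1
  apply propext
  constructor
  · rintro ⟨h1, h2⟩ b hb
    by_cases hb' : ∃ i, ι i = b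
    · obtain ⟨i, rfl⟩ := hb'
      exact h2 i fun j hj => hb j (by simp [hj])
    · push Not at hb'
      exact h1 b hb'
  · intro h
    refine ⟨fun b hb => h b fun i => hb _, fun b hb => h _ fun i hi => hb i (hι hi)⟩

lemma embed_id {N : ℕ} (X : Matrix (Idx n N) (Idx n N) K) : embed id X = X := by
  ext f g
  rw [embed_apply, if_pos]
  · rfl
  · intro b hb; exact absurd rfl (hb b)

lemma embed_zero {k N : ℕ} (ι : Fin k → Fin N) :
    embed ι (0 : Matrix (Idx n k) (Idx n k) K) = 0 := by
  ext f g; simp [embed_apply]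

lemma embed_add {k N : ℕ} (ι : Fin k → Fin N) (X Y : Matrix (Idx n k) (Idx n k) K) :
    embed ι (X + Y) = embed ι X + embed ι Y := by
  ext f g; simp only [embed_apply, Matrix.add_apply]; split_ifs <;> simp

/-- `embed` as a ring homomorphism. -/
def embedHom {k N : ℕ} (ι : Fin k → Fin N) (hι : Function.Injective ι) :
    Matrix (Idx n k) (Idx n k) K →+* Matrix (Idx n N) (Idx n N) K where
  toFun := embed ι
  map_one' := embed_one ι
  map_mul' := embed_mul ι hι
  map_zero' := embed_zero ι
  map_add' := embed_add ι

lemma embed_prod_apply {k l N : ℕ} (ι : Fin k → Fin N) (κ : Fin l → Fin N)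
    (hd : ∀ i j, ι i ≠ κ j) (X : Matrix (Idx n k) (Idx n k) K) (Y : Matrix (Idx n l) (Idx n l) K)
    (f g : Idx n N) : (embed ι X * embed κ Y) f g =
      if (∀ b, (∀ i, ι i ≠ b) → (∀ j, κ j ≠ b) → f b = g b) then
        X (f ∘ ι) (g ∘ ι) * Y (f ∘ κ) (g ∘ κ) else 0 := by
  classical
  rw [Matrix.mul_apply]
  set h0 : Idx n N := fun b => if ∃ i, ι i = b then g b else f b with hh0
  rw [Finset.sum_eq_single h0]
  · have e1 : h0 ∘ ι = g ∘ ι := by funext i; simp [hh0]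
    have e2 : h0 ∘ κ = f ∘ κ := by funext i; simp [hh0, hd]
    rw [embed_apply, embed_apply, if_pos, e1, e2]
    · by_cases hc : ∀ b, (∀ i, ι i ≠ b) → (∀ j, κ j ≠ b) → f b = g b
      · rw [if_pos hc, if_pos]
        intro b hb
        by_cases hb' : ∃ i, ι i = b
        · simp [hh0, hb']
        · simp only [hh0, if_neg hb']; push Not at hb'; exact hc b hb' hb
      · rw [if_neg hc, if_neg, mul_zero]
        intro h
        apply hc
        intro b hb1 hb2
        have := h b hb2
        simp only [hh0] at this
        rwa [if_neg (by simpa using hb1)] at this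
    · intro b hb
      simp [hh0, hb]
  · intro h _ hne
    by_contra hnz
    apply hne
    rw [embed_apply, embed_apply] at hnz
    split_ifs at hnz with h1 h2 <;> simp at hnz
    funext b
    by_cases hb' : ∃ i, ι i = b
    · obtain ⟨i, rfl⟩ := hb'
      simp [hh0, h2 (ι i) (fun j => (hd i j).symm)]
    · simp only [hh0, if_neg hb']; push Not at hb'; exact (h1 b hb').symm
  · simp

lemma embed_commute {k l N : ℕ} (ι : Fin k → Fin N) (κ : Fin l → Fin N)
    (hd : ∀ i j, ι i ≠ κ j) (X : Matrix (Idx n k) (Idx n k) K) (Y : Matrix (Idx n l) (Idx n l) K) :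
    Commute (embed ι X) (embed κ Y) := by
  ext f g
  rw [embed_prod_apply _ _ hd, embed_prod_apply _ _ fun i j => (hd j i).symm, mul_comm]
  congr 1
  apply propext
  constructor <;> exact fun h b h1 h2 => h b h2 h1

def coefA (q x : K) (u v : Fin n) : K := if u = v then (q - x * q⁻¹) / (1 - x) else 1
def coefB (q x : K) (u v : Fin n) : K :=
  if u = v then 0 else (q - q⁻¹) * (if u < v then x else 1) / (1 - x)

lemma RmI_mul_apply {N : ℕ} (q x : K) (i j : Fin N) (hij : i ≠ j)
    (M : Matrix (Idx n N) (Idx n N) K) (f g : Idx n N) :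
    (embed ![i, j] (RmI n q x) * M) f g =
      coefA q x (f i) (f j) * M f g + coefB q x (f i) (f j) * M (f ∘ Equiv.swap i j) g := by
  have : ∀ h, embed ![i, j] (RmI n q x) f h =
      (if h = f then coefA q x (f i) (f j) else 0) +
      (if h = f ∘ Equiv.swap i j then coefB q x (f i) (f j) else 0) := by
    intro h
    have c1 : h = f ↔ (∀ b, (∀ k, ![i, j] k ≠ b) → f b = h b) ∧ f i = h i ∧ f j = h j := by
      simp only [Fin.forall_fin_two, Matrix.cons_val_zero, Matrix.cons_val_one]
      constructor
      · rintro rfl; simp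
      · rintro ⟨h1, h2, h3⟩
        funext b
        by_cases hi : i = b
        · subst hi; exact h2.symm
        by_cases hj : j = b
        · subst hj; exact h3.symm
        exact (h1 b ⟨hi, hj⟩).symm
    have c2 : h = f ∘ Equiv.swap i j ↔
        (∀ b, (∀ k, ![i, j] k ≠ b) → f b = h b) ∧ h i = f j ∧ h j = f i := by
      simp only [Fin.forall_fin_two, Matrix.cons_val_zero, Matrix.cons_val_one]
      constructor
      · rintro rfl
        refine ⟨fun b hb => ?_, by simp, by simp⟩
        simp [Equiv.swap_apply_of_ne_of_ne hb.1.symm hb.2.symm]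
      · rintro ⟨h1, h2, h3⟩
        funext b
        by_cases hi : i = b
        · subst hi; simp [h2]
        by_cases hj : j = b
        · subst hj; simp [h3]
        simp [Equiv.swap_apply_of_ne_of_ne (Ne.symm hi) (Ne.symm hj), h1 b ⟨hi, hj⟩]
    rw [embed_apply]
    simp only [c1, c2]
    by_cases hb : (∀ b, (∀ k, ![i, j] k ≠ b) → f b = h b)
    · simp only [if_pos hb]
      have e : f ∘ ![i, j] = h ∘ ![i, j] ↔ f i = h i ∧ f j = h j := by
        simp [funext_iff, Fin.forall_fin_two]
      have a0 : (f ∘ ![i, j]) 0 = f i := rfl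
      have a1 : (f ∘ ![i, j]) 1 = f j := rfl
      have a2 : (h ∘ ![i, j]) 0 = h i := rfl
      have a3 : (h ∘ ![i, j]) 1 = h j := rfl
      unfold RmI coefA coefB
      rw [a0, a1, a2, a3]
      simp only [e]
      have hb' : (∀ b, (∀ k, ![i, j] k ≠ b) → f b = h b) ↔ True := iff_true_intro hb
      simp only [hb', true_and]
      by_cases hf : f i = f j <;> simp [hf]
    · simp only [if_neg hb, hb]; simp
  rw [Matrix.mul_apply]
  simp only [this, add_mul, ite_mul, zero_mul, Finset.sum_add_distrib, Finset.sum_ite_eq',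
    Finset.mem_univ, if_true]

lemma ybe_triple (q x y w : K) (hq : q ≠ 0) (hx : 1 - x ≠ 0) (hy : 1 - y ≠ 0) (hw : 1 - w ≠ 0)
    (h : x * y = w)
    (m : Fin n → Fin n → Fin n → K) (t u v : Fin n) :
    let R12 : (Fin n → Fin n → Fin n → K) → Fin n → Fin n → Fin n → K := fun m t u v =>
      coefA q x t u * m t u v + coefB q x t u * m u t v
    let R13 : (Fin n → Fin n → Fin n → K) → Fin n → Fin n → Fin n → K := fun m t u v =>
      coefA q w t v * m t u v + coefB q w t v * m v u t
    let R23 : (Fin n → Fin n → Fin n → K) → Fin n → Fin n → Fin n → K := fun m t u v =>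
      coefA q y u v * m t u v + coefB q y u v * m t v u
    R12 (R13 (R23 m)) t u v = R23 (R13 (R12 m)) t u v := by
  intro R12 R13 R23
  simp only [R12, R13, R23, coefA, coefB]
  rcases lt_trichotomy t u with h1 | h1 | h1 <;> rcases lt_trichotomy u v with h2 | h2 | h2 <;>
  rcases lt_trichotomy t v with h3 | h3 | h3 <;>
  first
  | (exfalso; omega)
  | (try subst h1
     try subst h2
     try subst h3
     try have h1' := h1.ne
     try have h1'' := h1.ne'
     try have h1''' := h1.not_gt
     try have h2' := h2.ne
     try have h2'' := h2.ne'
     try have h2''' := h2.not_gt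
     try have h3' := h3.ne
     try have h3'' := h3.ne'
     try have h3''' := h3.not_gt
     simp only [*, if_true, if_false, lt_irrefl]
     field_simp
     try subst h
     try ring)

end Mat
section Fin
variable {K : Type*} [Field K] {n : ℕ}

lemma ybe3 (q x y w : K) (hq : q ≠ 0) (hx : 1 - x ≠ 0) (hy : 1 - y ≠ 0) (hw : 1 - w ≠ 0)
    (h : x * y = w) :
    (embed ![0, 1] (RmI n q x) * embed ![0, 2] (RmI n q w) * embed ![1, 2] (RmI n q y) :
      Matrix (Idx n 3) (Idx n 3) K) =
    embed ![1, 2] (RmI n q y) * embed ![0, 2] (RmI n q w) * embed ![0, 1] (RmI n q x) := by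
  have s1 : ∀ t u v : Fin n, (![t, u, v] : Idx n 3) ∘ Equiv.swap 0 1 = ![u, t, v] := by
    intro t u v; funext i; fin_cases i <;> rfl
  have s2 : ∀ t u v : Fin n, (![t, u, v] : Idx n 3) ∘ Equiv.swap 0 2 = ![v, u, t] := by
    intro t u v; funext i; fin_cases i <;> rfl
  have s3 : ∀ t u v : Fin n, (![t, u, v] : Idx n 3) ∘ Equiv.swap 1 2 = ![t, v, u] := by
    intro t u v; funext i; fin_cases i <;> rfl
  ext f g
  have hf : f = ![f 0, f 1, f 2] := by funext i; fin_cases i <;> rfl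
  have key := ybe_triple q x y w hq hx hy hw h
    (fun t u v => (1 : Matrix (Idx n 3) (Idx n 3) K) ![t, u, v] g) (f 0) (f 1) (f 2)
  have v0 : ∀ t u v : Fin n, (![t, u, v] : Idx n 3) 0 = t := fun _ _ _ => rfl
  have v1 : ∀ t u v : Fin n, (![t, u, v] : Idx n 3) 1 = u := fun _ _ _ => rfl
  have v2 : ∀ t u v : Fin n, (![t, u, v] : Idx n 3) 2 = v := fun _ _ _ => rfl
  have m1 : ∀ (M : Matrix (Idx n 3) (Idx n 3) K) t u v,
      ((embed ![0, 1] (RmI n q x) : Matrix (Idx n 3) (Idx n 3) K) * M) ![t, u, v] g =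
      coefA q x t u * M ![t, u, v] g + coefB q x t u * M ![u, t, v] g := by
    intro M t u v
    rw [RmI_mul_apply q x 0 1 (by decide), s1, v0, v1]
  have m2 : ∀ (M : Matrix (Idx n 3) (Idx n 3) K) t u v,
      ((embed ![0, 2] (RmI n q w) : Matrix (Idx n 3) (Idx n 3) K) * M) ![t, u, v] g =
      coefA q w t v * M ![t, u, v] g + coefB q w t v * M ![v, u, t] g := by
    intro M t u v
    rw [RmI_mul_apply q w 0 2 (by decide), s2, v0, v2]
  have m3 : ∀ (M : Matrix (Idx n 3) (Idx n 3) K) t u v,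
      ((embed ![1, 2] (RmI n q y) : Matrix (Idx n 3) (Idx n 3) K) * M) ![t, u, v] g =
      coefA q y u v * M ![t, u, v] g + coefB q y u v * M ![t, v, u] g := by
    intro M t u v
    rw [RmI_mul_apply q y 1 2 (by decide), s3, v1, v2]
  have assoc3 : ∀ X Y Z : Matrix (Idx n 3) (Idx n 3) K, X * Y * Z = X * (Y * (Z * 1)) := by
    intro X Y Z; rw [mul_one, mul_assoc]
  rw [assoc3, assoc3]
  have gen : ∀ X Y : Matrix (Idx n 3) (Idx n 3) K,
      X ![f 0, f 1, f 2] g = Y ![f 0, f 1, f 2] g → X f g = Y f g := by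
    intro X Y h
    rwa [← hf] at h
  apply gen
  simp only [m1, m2, m3]
  exact key

lemma comp_pair {M N : ℕ} (e : Fin M → Fin N) (i j : Fin M) : e ∘ ![i, j] = ![e i, e j] := by
  funext k; fin_cases k <;> rfl

lemma ybeN {N : ℕ} (q wi wj wk : K) (hq : q ≠ 0) (hi : wi ≠ 0) (hj : wj ≠ 0) (hk : wk ≠ 0)
    (hij : wi ≠ wj) (hik : wi ≠ wk) (hjk : wj ≠ wk) (i j k : Fin N) (dij : i ≠ j) (dik : i ≠ k)
    (djk : j ≠ k) :
    (embed ![i, j] (RmI n q (wi / wj)) * embed ![i, k] (RmI n q (wi / wk)) *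
        embed ![j, k] (RmI n q (wj / wk)) : Matrix (Idx n N) (Idx n N) K) =
      embed ![j, k] (RmI n q (wj / wk)) * embed ![i, k] (RmI n q (wi / wk)) *
        embed ![i, j] (RmI n q (wi / wj)) := by
  have hinj : Function.Injective ![i, j, k] := by
    intro a b h
    fin_cases a <;> fin_cases b <;> simp_all
  have one_sub : ∀ a b : K, b ≠ 0 → a ≠ b → 1 - a / b ≠ 0 := by
    intro a b hb hab h
    apply hab
    rw [sub_eq_zero, eq_comm, div_eq_one_iff_eq hb] at h
    exact h
  have := congrArg (embed ![i, j, k]) (ybe3 (n := n) q (wi / wj) (wj / wk) (wi / wk) hq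
    (one_sub _ _ hj hij) (one_sub _ _ hk hjk) (one_sub _ _ hk hik) (by field_simp))
  simp only [embed_mul _ hinj, embed_comp _ hinj, comp_pair] at this
  exact this

/-- The R-matrix in positions `i, j`. -/
def Rz (n : ℕ) (q : K) {N : ℕ} (z : Fin N → K) (i j : Fin N) : Matrix (Idx n N) (Idx n N) K :=
  embed ![i, j] (RmI n q (z i / z j))

/-- The tilde R-matrix in positions `i, j`. -/
def Tz (n : ℕ) (q qbar : K) {N : ℕ} (z : Fin N → K) (i j : Fin N) :
    Matrix (Idx n N) (Idx n N) K :=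
  embed ![i, j] (RtI n q qbar (z i / z j))

lemma Tz_eq (q qbar : K) {N : ℕ} (z : Fin N → K) (i j : Fin N) :
    Tz n q qbar z i j = embed ![j, i] (RmI n q (z j / (z i * qbar ^ 2))) := by
  have hx : (z i / z j * qbar ^ 2)⁻¹ = z j / (z i * qbar ^ 2) := by
    rw [div_mul_eq_mul_div, inv_div]
  ext f g
  have hc : ∀ f : Idx n N, (f ∘ ![i, j]) ∘ Equiv.swap 0 1 = f ∘ ![j, i] := by
    intro f; funext k; fin_cases k <;> rfl
  rw [Tz, embed_apply, embed_apply, RtI, hx, hc, hc]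
  congr 1
  simp only [Fin.forall_fin_two, Matrix.cons_val_zero, Matrix.cons_val_one]
  apply propext
  constructor <;> exact fun h b hb => h b ⟨hb.2, hb.1⟩

lemma relRT {N : ℕ} (q qbar : K) (hq : q ≠ 0) (hqb : qbar ≠ 0) (z : Fin N → K)
    (hz : GoodZ qbar z) : RelRT (Rz n q z) (Tz n q qbar z) := by
  obtain ⟨z0, z1, z2⟩ := hz
  have hb : qbar ^ 2 ≠ 0 := pow_ne_zero _ hqb
  have dd : ∀ i j k l : Fin N, i ≠ k → i ≠ l → j ≠ k → j ≠ l → ∀ a b,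
      ![i, j] a ≠ ![k, l] b := by
    intro i j k l h1 h2 h3 h4 a b
    fin_cases a <;> fin_cases b <;> assumption
  constructor
  · intro i j k l h1 h2 h3 h4
    exact embed_commute _ _ (dd i j k l h1 h2 h3 h4) _ _
  · intro i j k l h1 h2 h3 h4
    exact embed_commute _ _ (dd i j k l h1 h2 h3 h4) _ _
  · intro i j k l h1 h2 h3 h4
    exact embed_commute _ _ (dd i j k l h1 h2 h3 h4) _ _
  · intro i j k h1 h2 h3
    exact ybeN q (z i) (z j) (z k) hq (z0 _) (z0 _) (z0 _) (z1 _ _ h1) (z1 _ _ h2) (z1 _ _ h3)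
      i j k h1 h2 h3
  · intro a b c h1 h2 h3
    rw [Tz_eq, Tz_eq, Rz]
    exact ybeN q (z b) (z c) (z a * qbar ^ 2) hq (z0 _) (z0 _) (mul_ne_zero (z0 _) hb)
      (z1 _ _ h3) (z2 _ _ h1).symm (z2 _ _ h2).symm b c a h3 h1.symm h2.symm
  · intro a b c h1 h2 h3
    rw [Tz_eq, Tz_eq, Rz]
    have := ybeN (n := n) q (z c) (z a * qbar ^ 2) (z b * qbar ^ 2) hq (z0 _)
      (mul_ne_zero (z0 _) hb) (mul_ne_zero (z0 _) hb) (z2 _ _ h2).symm (z2 _ _ h3).symm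
      (fun h => z1 _ _ h1 (mul_right_cancel₀ hb h)) c a b h2.symm h3.symm h1
    rw [mul_div_mul_right _ _ hb] at this
    exact this.symm

/-- Increasing list of the elements of `s`. -/
def srt {N : ℕ} (s : Finset (Fin N)) : List (Fin N) := (List.finRange N).filter (· ∈ s)

lemma mem_srt {N : ℕ} (s : Finset (Fin N)) (x : Fin N) : x ∈ srt s ↔ x ∈ s := by simp [srt]

lemma srt_pairwise {N : ℕ} (s : Finset (Fin N)) : (srt s).Pairwise (· < ·) :=
  (List.pairwise_lt_finRange N).filter _

lemma list_eq_srt {N : ℕ} (l : List (Fin N)) (s : Finset (Fin N)) (h : l.Pairwise (· < ·))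
    (hm : ∀ x, x ∈ l ↔ x ∈ s) : l = srt s := by
  have hp : l.Perm (srt s) := by
    rw [List.perm_ext_iff_of_nodup (h.imp ne_of_lt) ((srt_pairwise s).imp ne_of_lt)]
    intro x; rw [hm, mem_srt]
  exact hp.eq_of_pairwise (fun a b _ _ h1 h2 => absurd h1 h2.not_gt) h (srt_pairwise s)

lemma map_orderEmb {k N : ℕ} (s : Finset (Fin N)) (h : s.card = k) :
    (List.finRange k).map (s.orderEmbOfFin h) = srt s := by
  apply list_eq_srt
  · rw [List.pairwise_map]
    exact (List.pairwise_lt_finRange k).imp fun h => by simpa using h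
  · intro x
    have : x ∈ Set.range (s.orderEmbOfFin h) ↔ x ∈ s := by
      rw [Finset.range_orderEmbOfFin]; simp
    simpa using this

lemma mrgT_filter {α : Type*} [LinearOrder α] (L : List α) (hL : L.Pairwise (· < ·))
    (a b c ab bc : α → Bool) (hab : ∀ x, ab x = (a x || b x)) (hbc : ∀ x, bc x = (b x || c x))
    (d1 : ∀ x, a x → ¬ b x) (d2 : ∀ x, a x → ¬ c x) (d3 : ∀ x, b x → ¬ c x) :
    MrgT (L.filter a) (L.filter b) (L.filter c) (L.filter ab) (L.filter bc) := by
  induction L with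
  | nil => exact .nil
  | cons p L ih =>
    rw [List.pairwise_cons] at hL
    have ih := ih hL.2
    have hf : ∀ (f : α → Bool), ∀ x ∈ L.filter f, p < x := fun f x hx =>
      hL.1 x (List.mem_filter.1 hx).1
    have e1 := d1 p
    have e2 := d2 p
    have e3 := d3 p
    simp only [List.filter_cons, hab p, hbc p]
    cases ha : a p <;> cases hb : b p <;> cases hc : c p <;>
      simp only [ha, hb, hc, Bool.or_false, Bool.or_true, if_true, if_false,
        Bool.false_eq_true] <;>
      first
      | exact ih
      | exact .three _ _ _ _ _ _ (hf _) (hf _) (hf _) ih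
      | exact .two _ _ _ _ _ _ (hf _) (hf _) (hf _) ih
      | exact .one _ _ _ _ _ _ (hf _) (hf _) (hf _) ih
      | exact absurd hb (e1 ha)
      | exact absurd hc (e2 ha)
      | exact absurd hc (e3 hb)

/-- `A` placed on the tensor factors in `s` (zero if the size is wrong). -/
def Ez {k N : ℕ} (z : Fin N → K) (s : Finset (Fin N))
    (A : (Fin k → K) → Matrix (Idx n k) (Idx n k) K) : Matrix (Idx n N) (Idx n N) K :=
  if h : s.card = k then embed (s.orderEmbOfFin h) (A (z ∘ s.orderEmbOfFin h)) else 0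

/-- Summand of the shuffle product for a decomposition `t ⊔ u`. -/
def Sz {k l N : ℕ} (q qbar : K) (z : Fin N → K) (t u : Finset (Fin N))
    (A : (Fin k → K) → Matrix (Idx n k) (Idx n k) K)
    (B : (Fin l → K) → Matrix (Idx n l) (Idx n l) K) : Matrix (Idx n N) (Idx n N) K :=
  LtL (Rz n q z) (srt t) (srt u) * Ez z t A * MidL (Tz n q qbar z) (srt t) (srt u) * Ez z u B *
    GtL (Rz n q z) (srt t) (srt u)

lemma Sz_zero {k l N : ℕ} (q qbar : K) (z : Fin N → K) (t u : Finset (Fin N))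
    (A : (Fin k → K) → Matrix (Idx n k) (Idx n k) K)
    (B : (Fin l → K) → Matrix (Idx n l) (Idx n l) K) (h : ¬ (t.card = k ∧ u.card = l)) :
    Sz q qbar z t u A B = 0 := by
  unfold Sz Ez
  by_cases h1 : t.card = k
  · have h2 : ¬ u.card = l := fun h2 => h ⟨h1, h2⟩
    simp [h2]
  · simp [h1]

lemma prodLt_eq {k l N : ℕ} (q : K) (z : Fin N → K) (a : Fin k → Fin N) (b : Fin l → Fin N) :
    prodLt n q z a b = LtL (Rz n q z) ((List.finRange k).map a) ((List.finRange l).map b) := by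
  simp only [prodLt, LtL, List.map_map, ← List.map_reverse]; rfl

lemma prodGt_eq {k l N : ℕ} (q : K) (z : Fin N → K) (a : Fin k → Fin N) (b : Fin l → Fin N) :
    prodGt n q z a b = GtL (Rz n q z) ((List.finRange k).map a) ((List.finRange l).map b) := by
  simp only [prodGt, GtL, List.map_map, ← List.map_reverse]; rfl

lemma prodMid_eq {k l N : ℕ} (q qbar : K) (z : Fin N → K) (a : Fin k → Fin N)
    (b : Fin l → Fin N) : prodMid n q qbar z a b =
      MidL (Tz n q qbar z) ((List.finRange k).map a) ((List.finRange l).map b) := by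
  simp only [prodMid, MidL, List.map_map, ← List.map_reverse]; rfl

lemma shufS_eq {k l : ℕ} (q qbar : K)
    (A : (Fin k → K) → Matrix (Idx n k) (Idx n k) K)
    (B : (Fin l → K) → Matrix (Idx n l) (Idx n l) K) (z : Fin (k + l) → K) :
    shufS n q qbar A B z = ∑ s : Finset (Fin (k + l)), Sz q qbar z s sᶜ A B := by
  rw [← Finset.sum_filter_of_ne (p := fun s : Finset (Fin (k + l)) => s.card = k)]
  · rw [Finset.sum_subtype (p := fun s : Finset (Fin (k + l)) => s.card = k) _ (by simp)]
    unfold shufS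
    apply Finset.sum_congr rfl
    intro s _
    have hc : (s.1ᶜ).card = l := by rw [Finset.card_compl, s.2, Fintype.card_fin]; omega
    simp only [prodLt_eq, prodGt_eq, prodMid_eq, map_orderEmb]
    unfold Sz Ez
    rw [dif_pos s.2, dif_pos hc]
  · intro s _ h
    by_contra hne
    exact h (Sz_zero _ _ _ _ _ _ _ fun h => hne h.1)

lemma embed_list_prod {k N : ℕ} (e : Fin k → Fin N) (he : Function.Injective e)
    (L : List (Matrix (Idx n k) (Idx n k) K)) : embed e L.prod = (L.map (embed e)).prod :=
  map_list_prod (embedHom e he) L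

lemma embed_LtL {M N : ℕ} (e : Fin M → Fin N) (he : StrictMono e) (q : K) (z : Fin N → K)
    (a b : List (Fin M)) :
    embed e (LtL (Rz n q (z ∘ e)) a b) = LtL (Rz n q z) (a.map e) (b.map e) := by
  simp only [LtL, embed_list_prod e he.injective, List.map_map, ← List.map_reverse]
  congr 1
  apply List.map_congr_left
  intro j _
  simp only [Function.comp, embed_list_prod e he.injective, List.map_map]
  congr 1
  apply List.map_congr_left
  intro i _
  simp only [Function.comp, he.lt_iff_lt]
  split_ifs
  · simp only [Rz, embed_comp e he.injective, comp_pair, Function.comp]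
  · exact embed_one e

lemma embed_GtL {M N : ℕ} (e : Fin M → Fin N) (he : StrictMono e) (q : K) (z : Fin N → K)
    (a b : List (Fin M)) :
    embed e (GtL (Rz n q (z ∘ e)) a b) = GtL (Rz n q z) (a.map e) (b.map e) := by
  simp only [GtL, embed_list_prod e he.injective, List.map_map, ← List.map_reverse]
  congr 1
  apply List.map_congr_left
  intro j _
  simp only [Function.comp, embed_list_prod e he.injective, List.map_map]
  congr 1
  apply List.map_congr_left
  intro i _
  simp only [Function.comp, he.lt_iff_lt]
  split_ifs
  · simp only [Rz, embed_comp e he.injective, comp_pair, Function.comp]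
  · exact embed_one e

lemma embed_MidL {M N : ℕ} (e : Fin M → Fin N) (he : StrictMono e) (q qbar : K) (z : Fin N → K)
    (a b : List (Fin M)) :
    embed e (MidL (Tz n q qbar (z ∘ e)) a b) = MidL (Tz n q qbar z) (a.map e) (b.map e) := by
  simp only [MidL, embed_list_prod e he.injective, List.map_map, ← List.map_reverse]
  congr 1
  apply List.map_congr_left
  intro j _
  simp only [Function.comp, embed_list_prod e he.injective, List.map_map]
  congr 1
  apply List.map_congr_left
  intro i _
  simp only [Function.comp, Tz, embed_comp e he.injective, comp_pair]

lemma srt_map {M N : ℕ} (e : Fin M ↪o Fin N) (t : Finset (Fin M)) :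
    (srt t).map e = srt (t.map e.toEmbedding) := by
  apply list_eq_srt
  · rw [List.pairwise_map]
    exact (srt_pairwise t).imp fun h => by simpa using h
  · intro x; simp [mem_srt]

lemma embed_Ez {k M N : ℕ} (e : Fin M ↪o Fin N) (z : Fin N → K) (t : Finset (Fin M))
    (A : (Fin k → K) → Matrix (Idx n k) (Idx n k) K) :
    embed e (Ez (z ∘ e) t A) = Ez z (t.map e.toEmbedding) A := by
  unfold Ez
  by_cases h : t.card = k
  · have h' : (t.map e.toEmbedding).card = k := by simpa using h
    rw [dif_pos h, dif_pos h', embed_comp _ e.injective]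
    have : e ∘ t.orderEmbOfFin h = (t.map e.toEmbedding).orderEmbOfFin h' := by
      apply Finset.orderEmbOfFin_unique
      · intro x; simp
      · exact e.strictMono.comp (t.orderEmbOfFin h).strictMono
    rw [← this]; rfl
  · rw [dif_neg h, dif_neg (by simpa using h), embed_zero]

lemma embed_Sz {k l M N : ℕ} (e : Fin M ↪o Fin N) (q qbar : K) (z : Fin N → K)
    (t u : Finset (Fin M))
    (A : (Fin k → K) → Matrix (Idx n k) (Idx n k) K)
    (B : (Fin l → K) → Matrix (Idx n l) (Idx n l) K) :
    embed e (Sz q qbar (z ∘ e) t u A B) =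
      Sz q qbar z (t.map e.toEmbedding) (u.map e.toEmbedding) A B := by
  unfold Sz
  simp only [embed_mul _ e.injective, embed_LtL _ e.strictMono, embed_GtL _ e.strictMono,
    embed_MidL _ e.strictMono, embed_Ez, srt_map]

lemma Ez_shufS {k l N : ℕ} (q qbar : K) (z : Fin N → K) (s : Finset (Fin N))
    (A : (Fin k → K) → Matrix (Idx n k) (Idx n k) K)
    (B : (Fin l → K) → Matrix (Idx n l) (Idx n l) K) :
    Ez z s (shufS n q qbar A B) = ∑ t ∈ s.powerset, Sz q qbar z t (s \ t) A B := by
  by_cases h : s.card = k + l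
  · rw [Ez, dif_pos h, shufS_eq]
    set e := s.orderEmbOfFin h with he
    have hs : ∀ x, x ∈ s ↔ ∃ i, e i = x := by
      intro x
      have : x ∈ Set.range e ↔ x ∈ s := by
        rw [he, Finset.range_orderEmbOfFin]; simp
      rw [← this]; rfl
    have h1 : embed e (∑ t : Finset (Fin (k + l)), Sz q qbar (z ∘ e) t tᶜ A B) =
        ∑ t : Finset (Fin (k + l)), embed e (Sz q qbar (z ∘ e) t tᶜ A B) :=
      map_sum (embedHom e e.injective) _ _
    rw [h1]
    apply Finset.sum_bij (fun t _ => t.map e.toEmbedding)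
    · intro t _
      rw [Finset.mem_powerset]
      intro x hx
      obtain ⟨i, _, rfl⟩ := Finset.mem_map.1 hx
      exact (hs _).2 ⟨i, rfl⟩
    · intro t _ t' _ h
      exact Finset.map_injective _ h
    · intro u hu
      rw [Finset.mem_powerset] at hu
      refine ⟨Finset.univ.filter fun i => e i ∈ u, by simp, ?_⟩
      ext x
      simp only [Finset.mem_map, Finset.mem_filter, Finset.mem_univ, true_and]
      constructor
      · rintro ⟨i, hi, rfl⟩; exact hi
      · intro hx
        obtain ⟨i, rfl⟩ := (hs x).1 (hu hx)
        exact ⟨i, hx, rfl⟩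
    · intro t _
      rw [embed_Sz]
      congr 1
      ext x
      simp only [Finset.mem_map, Finset.mem_sdiff, Finset.mem_compl, hs]
      constructor
      · rintro ⟨i, hi, rfl⟩
        refine ⟨⟨i, rfl⟩, ?_⟩
        rintro ⟨j, hj, hji⟩
        exact hi (e.injective hji ▸ hj)
      · rintro ⟨⟨i, rfl⟩, hx⟩
        exact ⟨i, fun hi => hx ⟨i, hi, rfl⟩, rfl⟩
  · rw [Ez, dif_neg h, Finset.sum_eq_zero]
    intro t ht
    apply Sz_zero
    rintro ⟨h1, h2⟩
    apply h
    rw [Finset.mem_powerset] at ht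
    have := Finset.card_sdiff_add_card_eq_card ht
    omega

lemma Ez_univ {m N : ℕ} (h : m = N) (z : Fin N → K)
    (D : (Fin m → K) → Matrix (Idx n m) (Idx n m) K) :
    recastM n h (D fun i => z (Fin.cast h i)) = Ez z Finset.univ D := by
  subst h
  have hc : (Finset.univ : Finset (Fin m)).card = m := by simp
  rw [Ez, dif_pos hc]
  have : (id : Fin m → Fin m) = (Finset.univ : Finset (Fin m)).orderEmbOfFin hc := by
    apply Finset.orderEmbOfFin_unique
    · simp
    · exact strictMono_id
  rw [← this, embed_id]
  rfl

lemma Ez_univ' {N : ℕ} (z : Fin N → K) (D : (Fin N → K) → Matrix (Idx n N) (Idx n N) K) :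
    D z = Ez z Finset.univ D := Ez_univ rfl z D

lemma Ez_commute {k N : ℕ} (z : Fin N → K) (s : Finset (Fin N))
    (A : (Fin k → K) → Matrix (Idx n k) (Idx n k) K) (i j : Fin N) (hi : i ∉ s) (hj : j ∉ s)
    (X : Matrix (Idx n 2) (Idx n 2) K) : Commute (Ez z s A) (embed ![i, j] X) := by
  unfold Ez
  split_ifs with h
  · apply embed_commute
    intro a b hab
    have ha := s.orderEmbOfFin_mem h a
    rw [hab] at ha
    fin_cases b
    · exact hi ha
    · exact hj ha
  · exact Commute.zero_left _

lemma Ez_one {N : ℕ} (z : Fin N → K) : Ez z ∅ (oneS n) = 1 := by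
  rw [Ez, dif_pos (by simp)]
  exact embed_one _

lemma srt_empty {N : ℕ} : srt (∅ : Finset (Fin N)) = [] := by simp [srt]

lemma assoc_main {k l m N : ℕ} (q qbar : K) (hq : q ≠ 0) (hqb : qbar ≠ 0) (z : Fin N → K)
    (hz : GoodZ qbar z)
    (A : (Fin k → K) → Matrix (Idx n k) (Idx n k) K)
    (B : (Fin l → K) → Matrix (Idx n l) (Idx n l) K)
    (C : (Fin m → K) → Matrix (Idx n m) (Idx n m) K) :
    Ez z Finset.univ (shufS n q qbar (shufS n q qbar A B) C) =
      Ez z Finset.univ (shufS n q qbar A (shufS n q qbar B C)) := by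
  have H := relRT (n := n) q qbar hq hqb z hz
  rw [Ez_shufS, Ez_shufS]
  have e1 : ∀ s u : Finset (Fin N), Sz q qbar z s u (shufS n q qbar A B) C =
      ∑ t ∈ s.powerset, LtL (Rz n q z) (srt s) (srt u) * Sz q qbar z t (s \ t) A B *
        MidL (Tz n q qbar z) (srt s) (srt u) * Ez z u C * GtL (Rz n q z) (srt s) (srt u) := by
    intro s u
    rw [Sz, Ez_shufS, Finset.mul_sum, Finset.sum_mul, Finset.sum_mul, Finset.sum_mul]
  have e2 : ∀ t d : Finset (Fin N), Sz q qbar z t d A (shufS n q qbar B C) =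
      ∑ u ∈ d.powerset, LtL (Rz n q z) (srt t) (srt d) * Ez z t A *
        MidL (Tz n q qbar z) (srt t) (srt d) * Sz q qbar z u (d \ u) B C *
        GtL (Rz n q z) (srt t) (srt d) := by
    intro s u
    rw [Sz, Ez_shufS, Finset.mul_sum, Finset.sum_mul]
  simp only [e1, e2]
  rw [Finset.sum_sigma', Finset.sum_sigma']
  apply Finset.sum_bij' (fun x _ => (⟨x.2, x.1 \ x.2⟩ : Σ _ : Finset (Fin N), Finset (Fin N)))
    (fun x _ => (⟨x.1 ∪ x.2, x.1⟩ : Σ _ : Finset (Fin N), Finset (Fin N)))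
  · rintro ⟨s, t⟩ h
    simp only [Finset.mem_sigma, Finset.mem_powerset, Finset.subset_univ, true_and] at h ⊢
    exact Finset.sdiff_subset_sdiff (Finset.subset_univ _) (le_refl _)
  · rintro ⟨s, t⟩ h
    simp only [Finset.mem_sigma, Finset.mem_powerset, Finset.subset_univ, true_and]
    exact Finset.subset_union_left
  · rintro ⟨s, t⟩ h
    simp only [Finset.mem_sigma, Finset.mem_powerset, Finset.subset_univ, true_and] at h ⊢
    rw [Finset.union_sdiff_of_subset h]
  · rintro ⟨t, u⟩ h
    simp only [Finset.mem_sigma, Finset.mem_powerset, Finset.subset_univ, true_and] at h ⊢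
    congr 1
    ext x
    have := @h x
    simp only [Finset.mem_sdiff, Finset.mem_union] at this ⊢
    tauto
  · rintro ⟨s, t⟩ h
    simp only [Finset.mem_sigma, Finset.mem_powerset, Finset.subset_univ, true_and] at h ⊢
    have hc : (Finset.univ \ t) \ (s \ t) = Finset.univ \ s := by
      ext x
      have := @h x
      simp only [Finset.mem_sdiff, Finset.mem_univ, true_and]
      tauto
    rw [hc]
    have hM : MrgT (srt t) (srt (s \ t)) (srt (Finset.univ \ s)) (srt s)
        (srt (Finset.univ \ t)) := by
      apply mrgT_filter _ (List.pairwise_lt_finRange N)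
      · intro x; have := @h x; by_cases h1 : x ∈ s <;> by_cases h2 : x ∈ t <;> simp_all
      · intro x; have := @h x; by_cases h1 : x ∈ s <;> by_cases h2 : x ∈ t <;> simp_all
      · intro x; have := @h x; by_cases h1 : x ∈ s <;> by_cases h2 : x ∈ t <;> simp_all
      · intro x; have := @h x; by_cases h1 : x ∈ s <;> by_cases h2 : x ∈ t <;> simp_all
      · intro x; have := @h x; by_cases h1 : x ∈ s <;> by_cases h2 : x ∈ t <;> simp_all
    unfold Sz
    exact termwise H hM (Ez z t A) (Ez z (s \ t) B) (Ez z (Finset.univ \ s) C)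
      (fun i hi j hj => Ez_commute _ _ _ _ _ (by rwa [mem_srt] at hi) (by rwa [mem_srt] at hj) _)
      (fun i hi j hj => Ez_commute _ _ _ _ _ (by rwa [mem_srt] at hi) (by rwa [mem_srt] at hj) _)
      (fun i hi j hj => Ez_commute _ _ _ _ _ (by rwa [mem_srt] at hi) (by rwa [mem_srt] at hj) _)

lemma one_left {l N : ℕ} (q qbar : K) (z : Fin N → K)
    (B : (Fin l → K) → Matrix (Idx n l) (Idx n l) K) :
    Ez z Finset.univ (shufS n q qbar (oneS n) B) = Ez z Finset.univ B := by
  rw [Ez_shufS, Finset.sum_eq_single ∅]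
  · simp [Sz, srt_empty, Ez_one]
  · intro t _ ht
    apply Sz_zero
    rintro ⟨h, _⟩
    exact ht (Finset.card_eq_zero.1 h)
  · simp

lemma one_right {k N : ℕ} (q qbar : K) (z : Fin N → K)
    (A : (Fin k → K) → Matrix (Idx n k) (Idx n k) K) :
    Ez z Finset.univ (shufS n q qbar A (oneS n)) = Ez z Finset.univ A := by
  rw [Ez_shufS, Finset.sum_eq_single Finset.univ]
  · simp [Sz, srt_empty, Ez_one]
  · intro t _ ht
    apply Sz_zero
    rintro ⟨_, h⟩
    rw [Finset.card_eq_zero, Finset.sdiff_eq_empty_iff_subset] at h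
    exact ht (Finset.univ_subset_iff.1 h)
  · simp

end Fin
theorem shuffle_spectral_associative (n : ℕ) (K : Type*) [Field K]
    (q qbar : K) (hq : q ≠ 0) (hqb : qbar ≠ 0) (k l m : ℕ)
    (A : (Fin k → K) → Matrix (Idx n k) (Idx n k) K)
    (B : (Fin l → K) → Matrix (Idx n l) (Idx n l) K)
    (C : (Fin m → K) → Matrix (Idx n m) (Idx n m) K) :
    (∀ z : Fin (k + l + m) → K, GoodZ qbar z →
      shufS n q qbar (shufS n q qbar A B) C z =
        recastM n (add_assoc k l m).symm
          (shufS n q qbar A (shufS n q qbar B C)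
            (fun i => z (Fin.cast (add_assoc k l m).symm i)))) ∧
    (∀ z : Fin (0 + l) → K, GoodZ qbar z →
      shufS n q qbar (oneS n) B z =
        recastM n (Nat.zero_add l).symm
          (B (fun i => z (Fin.cast (Nat.zero_add l).symm i)))) ∧
    (∀ z : Fin (k + 0) → K, GoodZ qbar z →
      shufS n q qbar A (oneS n) z = A z) := by
  refine ⟨fun z hz => ?_, fun z hz => ?_, fun z hz => ?_⟩
  · exact (Ez_univ' z (shufS n q qbar (shufS n q qbar A B) C)).trans
      ((assoc_main q qbar hq hqb z hz A B C).trans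
        (Ez_univ (add_assoc k l m).symm z (shufS n q qbar A (shufS n q qbar B C))).symm)
  · exact (Ez_univ' z (shufS n q qbar (oneS n) B)).trans
      ((one_left q qbar z B).trans (Ez_univ (Nat.zero_add l).symm z B).symm)
  · exact (Ez_univ' z (shufS n q qbar A (oneS n))).trans
      ((one_right q qbar z A).trans (Ez_univ' z A).symm)
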